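/- Suppose $\lambda$ is in the affine Weyl orbit of a strictly dominant $\Lambda$ (with $0<(\Lambda,\gamma)<r$ for all positive roots), $\alpha,\beta$ are positive roots with $\alpha\ne\beta$ or $(\alpha,\beta)\ne 2$, and $(\lambda,\lambda^\alpha,\lambda^{\alpha,\beta})$ is admissible. Then there is a unique pair of positive roots $(\alpha',\beta')$ with $\alpha'\ne\alpha$ such that $(\lambda,\lambda^{\alpha'},\lambda^{\alpha',\beta'})$ is admissible and $\lambda^{\alpha',\beta'} = \lambda^{\alpha,\beta}$ (a 'commutative square'). Explicitly: if $(\alpha,\beta)=0$ then $(\alpha',\beta')=(\beta,\alpha)$; if $(\alpha,\beta)=1$ then $(\alpha',\beta') = (\beta, \alpha-\beta)$ or $(\beta-\alpha,\alpha)$ according to which difference is positive; if $(\alpha,\beta)=-1$ then $(\alpha',\beta') = (\alpha+\beta,\alpha)$ if $m_\alpha(\lambda) > m_\beta(\lambda^\alpha)$ and $(\beta,\alpha+\beta)$ if $m_\alpha(\lambda) < m_\beta(\lambda^\alpha)$. -/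

import Mathlib

open scoped Classical

/-- Number of inversions of a permutation of `Fin n` (the Coxeter length in `S_n`). -/
def invCount {n : ℕ} (σ : Equiv.Perm (Fin n)) : ℕ :=
  (Finset.univ.filter (fun p : Fin n × Fin n => p.1 < p.2 ∧ σ p.2 < σ p.1)).card

/-- The degree increment `d_α(λ)` for `λ = t_γ σ Λ` and the positive root
`α = ε_i - ε_j` (`i < j`): it equals `ℓ(r_α σ) - ℓ(σ)` if `(σΛ, α) > 0`, and
`ℓ(r_α σ) - ℓ(σ) + 2|α|` if `(σΛ, α) < 0`, where `|α| = j - i` and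
`(σΛ, ε_i - ε_j) = Λ(σ⁻¹ i) - Λ(σ⁻¹ j)`. -/
noncomputable def dval {n : ℕ} (Λ : Fin n → ℝ) (σ : Equiv.Perm (Fin n)) (i j : Fin n) : ℤ :=
  if Λ (σ.symm j) < Λ (σ.symm i) then
    (invCount (Equiv.swap i j * σ) : ℤ) - (invCount σ : ℤ)
  else
    (invCount (Equiv.swap i j * σ) : ℤ) - (invCount σ : ℤ) + 2 * ((j : ℤ) - (i : ℤ))


/-- The root `ε_i - ε_j` of `A_{n-1}`, as a vector in `ℝ^n`. -/
def rootv (n : ℕ) (i j : Fin n) : Fin n → ℝ :=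
  fun t => (if t = i then 1 else 0) - (if t = j then 1 else 0)

/-- Standard inner product on `ℝ^n`. -/
def pairing {n : ℕ} (v w : Fin n → ℝ) : ℝ := ∑ t, v t * w t

/-- `isM r λ α m` says that `m = m_α(λ)`: the unique integer with `0 < m < r`
and `m ≡ (λ, α) mod r`. -/
def isM {n : ℕ} (r : ℤ) (lam : Fin n → ℝ) (al : Fin n → ℝ) (m : ℤ) : Prop :=
  0 < m ∧ m < r ∧ ∃ c : ℤ, pairing lam al = (m : ℝ) + (r : ℝ) * (c : ℝ)

/-- `AdmSq n r Λ σ lam endv i' j' k' l'` says that for the positive roots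
`α' = ε_{i'} - ε_{j'}`, `β' = ε_{k'} - ε_{l'}`, the triple
`(λ, λ^{α'}, λ^{α',β'})` is admissible and `λ^{α',β'} = endv`. -/
def AdmSq (n : ℕ) (r : ℤ) (Λ : Fin n → ℝ) (σ : Equiv.Perm (Fin n))
    (lam endv : Fin n → ℝ) (i' j' k' l' : Fin n) : Prop :=
  i' < j' ∧ k' < l' ∧
  dval Λ σ i' j' = 1 ∧ dval Λ (Equiv.swap i' j' * σ) k' l' = 1 ∧
  ∃ μ μ' : ℤ,
    isM r lam (rootv n i' j') μ ∧
    isM r (fun t => lam t - (μ : ℝ) * rootv n i' j' t) (rootv n k' l') μ' ∧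
    endv = fun t => lam t - (μ : ℝ) * rootv n i' j' t - (μ' : ℝ) * rootv n k' l' t


/-- Cyclic distance from `a` down to `b` modulo `r`. -/
noncomputable def dd (r a b : ℝ) : ℝ := if b < a then a - b else a - b + r

/-- Cover condition of the quantum Bruhat graph in terms of cyclic distances. -/
def QC {n : ℕ} (r : ℝ) (x : Fin n → ℝ) (i j : Fin n) : Prop :=
  ∀ t, i < t → t < j → dd r (x i) (x j) < dd r (x i) (x t)

/-- Values distinct modulo `r`, within a window of length `r`. -/
def Win {n : ℕ} (r : ℝ) (x : Fin n → ℝ) : Prop :=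
  ∀ a b, a ≠ b → x a ≠ x b ∧ x a - x b < r

/-- swapped function -/
def sw {n : ℕ} (x : Fin n → ℝ) (i j : Fin n) : Fin n → ℝ := fun t => x (Equiv.swap i j t)

theorem sw_left {n : ℕ} (x : Fin n → ℝ) (i j : Fin n) : sw x i j i = x j := by simp [sw]
theorem sw_right {n : ℕ} (x : Fin n → ℝ) (i j : Fin n) : sw x i j j = x i := by simp [sw]
theorem sw_other {n : ℕ} (x : Fin n → ℝ) (i j t : Fin n) (h1 : t ≠ i) (h2 : t ≠ j) :
    sw x i j t = x t := by simp [sw, Equiv.swap_apply_of_ne_of_ne h1 h2]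

theorem Win.sw {n : ℕ} {r : ℝ} {x : Fin n → ℝ} (h : Win r x) (i j : Fin n) :
    Win r (sw x i j) := by
  intro a b hab
  exact h _ _ (by simpa using hab)

theorem isM_iff {n : ℕ} (r : ℤ) (x : Fin n → ℝ) (hw : Win (r : ℝ) x)
    (γ : Fin n → ℤ) (i j : Fin n) (hij : i ≠ j) (m : ℤ) :
    isM r (fun t => x t + (r : ℝ) * (γ t : ℝ)) (rootv n i j) m ↔
      (m : ℝ) = dd r (x i) (x j) := by
  have hp : pairing (fun t => x t + (r : ℝ) * (γ t : ℝ)) (rootv n i j)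
      = x i - x j + r * ((γ i : ℝ) - γ j) := by
    simp [pairing, rootv, mul_sub, Finset.sum_sub_distrib]
    ring
  have h1 := hw i j hij
  have h2 := hw j i hij.symm
  unfold isM
  rw [hp]
  constructor
  · rintro ⟨hm0, hmr, c, hc⟩
    have hm0' : (0 : ℝ) < m := by exact_mod_cast hm0
    have hmr' : (m : ℝ) < r := by exact_mod_cast hmr
    have hr0 : (0 : ℝ) < r := by linarith
    obtain ⟨e, he⟩ : ∃ e : ℤ, e = c - γ i + γ j := ⟨_, rfl⟩
    have he' : (e : ℝ) = c - γ i + γ j := by rw [he]; push_cast; ring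
    have hx : x i - x j = m + r * e := by rw [he']; linarith
    have e1 : e < 1 := by
      have : (e : ℝ) < 1 := by
        by_contra hh
        push Not at hh
        nlinarith
      exact_mod_cast this
    have e2 : -2 < e := by
      have : (-2 : ℝ) < e := by
        by_contra hh
        push Not at hh
        nlinarith
      exact_mod_cast this
    have : e = 0 ∨ e = -1 := by omega
    unfold dd
    rcases this with h | h <;> rw [h] at hx <;> push_cast at hx <;> split_ifs <;> linarith
  · intro hm
    unfold dd at hm
    refine ⟨?_, ?_, ?_⟩
    · have : (0 : ℝ) < m := by rw [hm]; split_ifs <;> linarith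
      exact_mod_cast this
    · have : (m : ℝ) < r := by
        rw [hm]
        split_ifs with h
        · linarith
        · have := lt_of_le_of_ne (not_lt.mp h) h1.1
          linarith
      exact_mod_cast this
    · split_ifs at hm with h
      · exact ⟨γ i - γ j, by push_cast; linarith⟩
      · exact ⟨γ i - γ j - 1, by push_cast; linarith⟩

theorem reflect {n : ℕ} (r : ℤ) (x : Fin n → ℝ)
    (γ : Fin n → ℤ) (i j : Fin n) (hij : i ≠ j) :
    ∃ γ' : Fin n → ℤ, (fun t => (x t + (r : ℝ) * (γ t : ℝ))
        - dd r (x i) (x j) * rootv n i j t) =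
      fun t => sw x i j t + (r : ℝ) * (γ' t : ℝ) := by
  let e : ℤ := if x j < x i then 0 else 1
  refine ⟨fun t => γ t + (if t = j then e else 0) - (if t = i then e else 0), ?_⟩
  funext t
  by_cases h1 : t = i
  · subst h1
    rw [sw_left]
    simp only [rootv, dd, e]
    split_ifs <;> (push_cast; ring)
  · by_cases h2 : t = j
    · subst h2
      rw [sw_right]
      simp only [rootv, dd, e]
      split_ifs <;> (push_cast; ring)
    · rw [sw_other _ _ _ _ h1 h2]
      simp [rootv, h1, h2]

/-- indicator of an inversion -/
def Fv {n : ℕ} (f : Fin n → Fin n) (p q : Fin n) : ℤ := if p < q ∧ f q < f p then 1 else 0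

theorem invCount_eq {n : ℕ} (σ : Equiv.Perm (Fin n)) :
    (invCount σ : ℤ) = ∑ p, ∑ q, Fv σ.symm p q := by
  have h : invCount σ = (Finset.univ.filter
      (fun p : Fin n × Fin n => p.1 < p.2 ∧ σ.symm p.2 < σ.symm p.1)).card := by
    unfold invCount
    refine Finset.card_bij (fun p _ => (σ p.2, σ p.1)) ?_ ?_ ?_
    · intro p hp
      simp at hp ⊢
      exact ⟨hp.2, hp.1⟩
    · intro p _ q _ h
      simp at h
      exact Prod.ext h.2 h.1
    · intro p hp
      simp at hp
      refine ⟨(σ.symm p.2, σ.symm p.1), ?_, ?_⟩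
      · simp; exact ⟨hp.2, hp.1⟩
      · simp
  rw [h, Finset.card_filter, ← Finset.univ_product_univ, Finset.sum_product]
  push_cast
  rfl

theorem sum_split {n : ℕ} (F : Fin n → ℤ) (i j : Fin n) (hij : i ≠ j) :
    ∑ p, F p = F i + F j + ∑ p ∈ ((Finset.univ.erase i).erase j), F p := by
  rw [← Finset.add_sum_erase _ F (Finset.mem_univ i),
    ← Finset.add_sum_erase _ F (a := j) (by simp [hij.symm])]
  ring

theorem inv_split {n : ℕ} (F : Fin n → Fin n → ℤ) (i j : Fin n) (hij : i ≠ j) :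
    ∑ p, ∑ q, F p q = F i i + F i j + F j i + F j j +
      ∑ t ∈ ((Finset.univ.erase i).erase j), (F i t + F j t + F t i + F t j) +
      ∑ p ∈ ((Finset.univ.erase i).erase j), ∑ q ∈ ((Finset.univ.erase i).erase j), F p q := by
  rw [sum_split _ i j hij, sum_split _ i j hij, sum_split (F j) i j hij,
    Finset.sum_congr rfl (fun p _ => sum_split (F p) i j hij)]
  simp only [Finset.sum_add_distrib]
  ring

theorem inv_diff {n : ℕ} (f g : Fin n → Fin n) (hf : Function.Injective f)
    (i j : Fin n) (hij : i < j) (hgi : g i = f j) (hgj : g j = f i)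
    (hg : ∀ t, t ≠ i → t ≠ j → g t = f t) :
    (f i < f j → ∑ p, ∑ q, Fv g p q - ∑ p, ∑ q, Fv f p q =
      1 + 2 * ∑ t, if i < t ∧ t < j ∧ f i < f t ∧ f t < f j then (1 : ℤ) else 0) ∧
    (f j < f i → ∑ p, ∑ q, Fv g p q - ∑ p, ∑ q, Fv f p q =
      -1 - 2 * ∑ t, if i < t ∧ t < j ∧ f j < f t ∧ f t < f i then (1 : ℤ) else 0) := by
  have hne : i ≠ j := hij.ne
  rw [inv_split (Fv g) i j hne, inv_split (Fv f) i j hne]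
  have hS : ∑ p ∈ ((Finset.univ.erase i).erase j), ∑ q ∈ ((Finset.univ.erase i).erase j), Fv g p q
      = ∑ p ∈ ((Finset.univ.erase i).erase j), ∑ q ∈ ((Finset.univ.erase i).erase j), Fv f p q := by
    refine Finset.sum_congr rfl fun p hp => Finset.sum_congr rfl fun q hq => ?_
    simp at hp hq
    simp [Fv, hg p hp.2 hp.1, hg q hq.2 hq.1]
  rw [hS]
  constructor
  · intro hlt
    rw [sum_split _ i j hne]
    have hT : ∑ t ∈ ((Finset.univ.erase i).erase j), (Fv g i t + Fv g j t + Fv g t i + Fv g t j)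
      = ∑ t ∈ ((Finset.univ.erase i).erase j), (Fv f i t + Fv f j t + Fv f t i + Fv f t j)
       + 2 * ∑ t ∈ ((Finset.univ.erase i).erase j),
          (if i < t ∧ t < j ∧ f i < f t ∧ f t < f j then (1 : ℤ) else 0) := by
      rw [Finset.mul_sum, ← Finset.sum_add_distrib]
      refine Finset.sum_congr rfl fun t ht => ?_
      simp at ht
      have h1 := hf.ne ht.1
      have h2 := hf.ne ht.2
      simp only [Fv, hg t ht.2 ht.1, hgi, hgj]
      grind
    rw [hT]
    simp [Fv, hgi, hgj, hlt, hlt.not_gt, hij, hij.not_gt]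
    ring
  · intro hlt
    rw [sum_split _ i j hne]
    have hT : ∑ t ∈ ((Finset.univ.erase i).erase j), (Fv g i t + Fv g j t + Fv g t i + Fv g t j)
      = ∑ t ∈ ((Finset.univ.erase i).erase j), (Fv f i t + Fv f j t + Fv f t i + Fv f t j)
       - 2 * ∑ t ∈ ((Finset.univ.erase i).erase j),
          (if i < t ∧ t < j ∧ f j < f t ∧ f t < f i then (1 : ℤ) else 0) := by
      rw [Finset.mul_sum, ← Finset.sum_sub_distrib]
      refine Finset.sum_congr rfl fun t ht => ?_
      simp at ht
      have h1 := hf.ne ht.1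
      have h2 := hf.ne ht.2
      simp only [Fv, hg t ht.2 ht.1, hgi, hgj]
      grind
    rw [hT]
    simp [Fv, hgi, hgj, hlt, hlt.not_gt, hij, hij.not_gt]
    ring

theorem sum_between {n : ℕ} (i j : Fin n) (hij : i < j) :
    ∑ t, (if i < t ∧ t < j then (1 : ℤ) else 0) = (j : ℤ) - i - 1 := by
  have : (Finset.univ.filter fun t => i < t ∧ t < j) = Finset.Ioo i j := by ext; simp
  rw [Finset.sum_boole, this, Fin.card_Ioo]
  have : (i : ℕ) < j := hij
  push_cast [Nat.sub_sub, Nat.cast_sub (show (i : ℕ) + 1 ≤ j by omega)]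
  ring

theorem dval_iff {n : ℕ} (r : ℝ) (Λ : Fin n → ℝ)
    (hΛ : ∀ a b : Fin n, a < b → 0 < Λ a - Λ b ∧ Λ a - Λ b < r)
    (σ : Equiv.Perm (Fin n)) (i j : Fin n) (hij : i < j) :
    dval Λ σ i j = 1 ↔ QC r (fun t => Λ (σ.symm t)) i j := by
  have hmono : ∀ a b : Fin n, Λ b < Λ a ↔ a < b := by
    intro a b
    constructor
    · intro h
      by_contra hh
      rcases (not_lt.mp hh).lt_or_eq with h' | h'
      · have := (hΛ _ _ h').1; linarith
      · subst h'; exact lt_irrefl _ h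
    · intro h; have := (hΛ _ _ h).1; linarith
  have key := inv_diff σ.symm (Equiv.swap i j * σ).symm σ.symm.injective i j hij
    (by simp [Equiv.Perm.mul_def]) (by simp [Equiv.Perm.mul_def])
    (by intro t h1 h2; simp [Equiv.Perm.mul_def, Equiv.swap_apply_of_ne_of_ne h1 h2])
  rw [← invCount_eq, ← invCount_eq] at key
  unfold dval QC
  simp only [hmono, dd]
  split_ifs with h
  · rw [key.1 h]
    constructor
    · intro h0 t h1 h2
      have h0' : ∑ t, (if i < t ∧ t < j ∧ σ.symm i < σ.symm t ∧ σ.symm t < σ.symm j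
        then (1 : ℤ) else 0) = 0 := by linarith
      rw [Finset.sum_eq_zero_iff_of_nonneg (by intros; split_ifs <;> norm_num)] at h0'
      have := h0' t (Finset.mem_univ t)
      have hne : σ.symm t ≠ σ.symm j := σ.symm.injective.ne h2.ne
      have h3 : ¬ (σ.symm i < σ.symm t ∧ σ.symm t < σ.symm j) := by
        intro h3; simp [h1, h2, h3] at this
      split_ifs with h4
      · have : σ.symm j < σ.symm t := by grind
        have := (hΛ _ _ this).1
        linarith
      · have := (hΛ _ _ h).1
        have : σ.symm t < σ.symm j := by grind
        have := (hΛ _ _ this).2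
        linarith
    · intro h0
      rw [Finset.sum_eq_zero]
      · ring
      · intro t _
        rw [if_neg]
        rintro ⟨h1, h2, h3, h4⟩
        have := h0 t h1 h2
        rw [if_pos h3] at this
        have := (hΛ _ _ h4).1
        linarith
  · have h' : σ.symm j < σ.symm i := by
      have : σ.symm i ≠ σ.symm j := σ.symm.injective.ne hij.ne
      grind
    rw [key.2 h']
    have hb := sum_between i j hij
    have hs : ∑ t, (if i < t ∧ t < j ∧ σ.symm j < σ.symm t ∧ σ.symm t < σ.symm i
        then (1 : ℤ) else 0) + ∑ t, (if i < t ∧ t < j ∧ ¬ (σ.symm j < σ.symm t ∧ σ.symm t < σ.symm i)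
        then (1 : ℤ) else 0) = (j : ℤ) - i - 1 := by
      rw [← hb, ← Finset.sum_add_distrib]
      refine Finset.sum_congr rfl fun t _ => ?_
      grind
    constructor
    · intro h0 t h1 h2
      have h0' : ∑ t, (if i < t ∧ t < j ∧ ¬ (σ.symm j < σ.symm t ∧ σ.symm t < σ.symm i)
        then (1 : ℤ) else 0) = 0 := by linarith
      rw [Finset.sum_eq_zero_iff_of_nonneg (by intros; split_ifs <;> norm_num)] at h0'
      have := h0' t (Finset.mem_univ t)
      have h3 : (σ.symm j < σ.symm t ∧ σ.symm t < σ.symm i) := by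
        by_contra h3; simp only [h1, h2, h3] at this; simp at this
      rw [if_neg h3.2.not_gt]
      have := (hΛ _ _ h3.1).1
      linarith
    · intro h0
      have h0' : ∑ t, (if i < t ∧ t < j ∧ ¬ (σ.symm j < σ.symm t ∧ σ.symm t < σ.symm i)
        then (1 : ℤ) else 0) = 0 := by
        apply Finset.sum_eq_zero
        intro t _
        rw [if_neg]
        rintro ⟨h1, h2, h3⟩
        apply h3
        have h4 := h0 t h1 h2
        have h5 : σ.symm t ≠ σ.symm i := σ.symm.injective.ne h1.ne'
        split_ifs at h4 with h6
        · have := (hΛ _ _ h6).2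
          have := (hΛ _ _ h').1
          have : σ.symm j < σ.symm t := by
            rw [← hmono]; 
            have := (hΛ _ _ (h'.trans h6)).2
            linarith
          exact absurd (h'.trans h6) (by linarith [(hΛ _ _ (h'.trans h6)).2])
        · refine ⟨?_, by grind⟩
          rw [← hmono]; linarith
      linarith

theorem adm_iff {n : ℕ} (r : ℤ) (Λ : Fin n → ℝ)
    (hΛ : ∀ a b : Fin n, a < b → 0 < Λ a - Λ b ∧ Λ a - Λ b < (r : ℝ))
    (σ : Equiv.Perm (Fin n)) (γ : Fin n → ℤ) (x : Fin n → ℝ)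
    (hx : x = fun t => Λ (σ.symm t)) (hw : Win (r : ℝ) x)
    (lam : Fin n → ℝ) (hlam : lam = fun t => x t + (r : ℝ) * (γ t : ℝ))
    (endv : Fin n → ℝ) (i j k l : Fin n) :
    AdmSq n r Λ σ lam endv i j k l ↔
      i < j ∧ k < l ∧ QC r x i j ∧ QC r (sw x i j) k l ∧ ∃ μ μ' : ℤ,
        (μ : ℝ) = dd r (x i) (x j) ∧ (μ' : ℝ) = dd r (sw x i j k) (sw x i j l) ∧
        endv = fun t => lam t - (μ : ℝ) * rootv n i j t - (μ' : ℝ) * rootv n k l t := by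
  have hs : (fun t => Λ ((Equiv.swap i j * σ).symm t)) = sw x i j := by
    funext t; simp [sw, hx, Equiv.Perm.mul_def]
  unfold AdmSq
  refine and_congr_right fun h1 => and_congr_right fun h2 => ?_
  rw [dval_iff r Λ hΛ _ _ _ h1, dval_iff r Λ hΛ _ _ _ h2, hs, ← hx]
  refine and_congr_right fun _ => and_congr_right fun _ =>
    exists_congr fun μ => exists_congr fun μ' => ?_
  rw [hlam, isM_iff r x hw γ i j h1.ne μ]
  refine and_congr_right fun h3 => ?_
  obtain ⟨γ', h⟩ := reflect r x γ i j h1.ne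
  rw [h3, h, isM_iff r (sw x i j) (hw.sw i j) γ' k l h2.ne μ']

theorem ex_disj {n : ℕ} (r : ℝ) (x : Fin n → ℝ) (hw : Win r x) (i j k l : Fin n)
    (hij : i < j) (hkl : k < l) (h1 : i ≠ k) (h2 : i ≠ l) (h3 : j ≠ k) (h4 : j ≠ l)
    (hQ : QC r x i j) (hQ' : QC r (sw x i j) k l) :
    QC r x k l ∧ QC r (sw x k l) i j ∧
      dd r (x k) (x l) = dd r (sw x i j k) (sw x i j l) ∧
      dd r (sw x k l i) (sw x k l j) = dd r (x i) (x j) := by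
  have e1 := sw_left x i j
  have e2 := sw_right x i j
  have e3 := sw_other x i j
  have f1 := sw_left x k l
  have f2 := sw_right x k l
  have f3 := sw_other x k l
  have hk : sw x i j k = x k := e3 k h1.symm h3.symm
  have hl : sw x i j l = x l := e3 l h2.symm h4.symm
  have hi : sw x k l i = x i := f3 i h1 h2
  have hj : sw x k l j = x j := f3 j h3 h4
  have w : ∀ a b, a ≠ b → x a ≠ x b ∧ x a - x b < r ∧ x b - x a < r :=
    fun a b h => ⟨(hw a b h).1, (hw a b h).2, (hw b a h.symm).2⟩
  have w1 := w i j hij.ne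
  have w2 := w i k h1
  have w3 := w i l h2
  have w4 := w j k h3
  have w5 := w j l h4
  have w6 := w k l hkl.ne
  have a1 := hQ k
  have a2 := hQ l
  have a3 := hQ' i
  have a4 := hQ' j
  rw [e1, hk, hl] at a3
  rw [e2, hk, hl] at a4
  refine ⟨?_, ?_, by rw [hk, hl], by rw [hi, hj]⟩
  · intro t ht1 ht2
    have b1 := hQ' t ht1 ht2
    by_cases hti : t = i
    · subst hti
      simp only [dd] at *
      grind
    · by_cases htj : t = j
      · subst htj
        simp only [dd] at *
        grind
      · rw [e3 t hti htj, hk, hl] at b1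
        exact b1
  · intro t ht1 ht2
    have b1 := hQ t ht1 ht2
    rw [hi, hj]
    by_cases hti : t = k
    · subst hti
      rw [f1]
      simp only [dd] at *
      grind
    · by_cases htj : t = l
      · subst htj
        rw [f2]
        simp only [dd] at *
        grind
      · rw [f3 t hti htj]
        exact b1

theorem Win.tri {n : ℕ} {r : ℝ} {x : Fin n → ℝ} (hw : Win r x) {a b c : Fin n}
    (h1 : a ≠ b) (h2 : b ≠ c) (h3 : a ≠ c) :
    (x a ≠ x b ∧ x a - x b < r) ∧ (x b ≠ x c ∧ x b - x c < r) ∧ (x a ≠ x c ∧ x a - x c < r) ∧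
    (x b ≠ x a ∧ x b - x a < r) ∧ (x c ≠ x b ∧ x c - x b < r) ∧ (x c ≠ x a ∧ x c - x a < r) :=
  ⟨hw a b h1, hw b c h2, hw a c h3, hw b a h1.symm, hw c b h2.symm, hw c a h3.symm⟩

set_option maxHeartbeats 8000000 in
/-- Existence of the second side of the commutative square when the two roots are supported on
three indices `a < b < c`.  The roots are `(p,q)`, `(k,l)` on the first side and `(u,v)`, `(y,z)`
on the second; `s` and `w` are the indices outside `(p,q)` and `(u,v)`. -/
theorem ex_T {n : ℕ} (r : ℝ) (x : Fin n → ℝ) (hw : Win r x) (a b c : Fin n)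
    (hab : a < b) (hbc : b < c) (m m' : ℝ) (p q k l s u v y z w : Fin n) (A B : ℝ)
    (hcase :
      (a = p ∧ c = q ∧ a = k ∧ b = l ∧ b = s ∧ a = u ∧ b = v ∧ b = y ∧ c = z ∧ c = w ∧
        m + m' = A ∧ m = B ∧ True) ∨
      (a = p ∧ b = q ∧ a = k ∧ c = l ∧ c = s ∧ b = u ∧ c = v ∧ a = y ∧ b = z ∧ a = w ∧
        m' = A ∧ m + m' = B ∧ True) ∨
      (a = p ∧ c = q ∧ b = k ∧ c = l ∧ b = s ∧ b = u ∧ c = v ∧ a = y ∧ b = z ∧ a = w ∧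
        m + m' = A ∧ m = B ∧ True) ∨
      (b = p ∧ c = q ∧ a = k ∧ c = l ∧ a = s ∧ a = u ∧ b = v ∧ b = y ∧ c = z ∧ c = w ∧
        m' = A ∧ m + m' = B ∧ True) ∨
      (a = p ∧ b = q ∧ b = k ∧ c = l ∧ c = s ∧ a = u ∧ c = v ∧ a = y ∧ b = z ∧ b = w ∧
        m' = A ∧ m - m' = B ∧ m' < m) ∨
      (a = p ∧ b = q ∧ b = k ∧ c = l ∧ c = s ∧ b = u ∧ c = v ∧ a = y ∧ c = z ∧ a = w ∧
        m' - m = A ∧ m = B ∧ m < m') ∨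
      (b = p ∧ c = q ∧ a = k ∧ b = l ∧ a = s ∧ a = u ∧ c = v ∧ b = y ∧ c = z ∧ b = w ∧
        m' = A ∧ m - m' = B ∧ m' < m) ∨
      (b = p ∧ c = q ∧ a = k ∧ b = l ∧ a = s ∧ a = u ∧ b = v ∧ a = y ∧ c = z ∧ c = w ∧
        m' - m = A ∧ m = B ∧ m < m'))
    (hm : m = dd r (x p) (x q)) (hm' : m' = dd r (sw x p q k) (sw x p q l))
    (hQ : QC r x p q) (hQ' : QC r (sw x p q) k l) :
    QC r x u v ∧ QC r (sw x u v) y z ∧ A = dd r (x u) (x v) ∧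
      B = dd r (sw x u v y) (sw x u v z) := by
  have hac := hab.trans hbc
  have e1 := sw_left x p q
  have e2 := sw_right x p q
  have e3 := sw_other x p q
  have e4 := e3 s
  have f1 := sw_left x u v
  have f2 := sw_right x u v
  have f3 := sw_other x u v
  have f4 := f3 w
  obtain ⟨w1, w2, w3, w4, w5, w6⟩ := hw.tri hab.ne hbc.ne hac.ne
  have a1 := hQ b
  have a2 := hQ' b
  rcases hcase with ⟨rfl, rfl, rfl, rfl, rfl, rfl, rfl, rfl, rfl, rfl, rfl, rfl, hlt⟩ |
    ⟨rfl, rfl, rfl, rfl, rfl, rfl, rfl, rfl, rfl, rfl, rfl, rfl, hlt⟩ |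
    ⟨rfl, rfl, rfl, rfl, rfl, rfl, rfl, rfl, rfl, rfl, rfl, rfl, hlt⟩ |
    ⟨rfl, rfl, rfl, rfl, rfl, rfl, rfl, rfl, rfl, rfl, rfl, rfl, hlt⟩ |
    ⟨rfl, rfl, rfl, rfl, rfl, rfl, rfl, rfl, rfl, rfl, rfl, rfl, hlt⟩ |
    ⟨rfl, rfl, rfl, rfl, rfl, rfl, rfl, rfl, rfl, rfl, rfl, rfl, hlt⟩ |
    ⟨rfl, rfl, rfl, rfl, rfl, rfl, rfl, rfl, rfl, rfl, rfl, rfl, hlt⟩ |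
    ⟨rfl, rfl, rfl, rfl, rfl, rfl, rfl, rfl, rfl, rfl, rfl, rfl, hlt⟩
  all_goals
    replace e4 := e4 (by omega) (by omega)
    replace f4 := f4 (by omega) (by omega)
    simp only [e1, e2, e4, f1, f2, f4, QC] at *
    rw [← and_assoc]
    constructor
    · constructor <;> intro t ht1 ht2 <;> by_cases htb : t = b
      any_goals
        subst htb
        clear hQ hQ' hw e3 f3
        simp only [lt_irrefl, false_imp_iff, forall_true_left, hab, hbc, sw_left, sw_right] at a1 a2 ⊢
        subst hm hm'
        simp only [dd] at *
        first
        | (exfalso; omega)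
        | (rcases lt_or_gt_of_ne w1.1 with o1 | o1 <;> rcases lt_or_gt_of_ne w2.1 with o2 | o2 <;>
            rcases lt_or_gt_of_ne w3.1 with o3 | o3 <;>
            simp only [o1, o2, o3, o1.not_gt, o2.not_gt, o3.not_gt, if_true, if_false] at a1 a2 hlt ⊢ <;>
            linarith [w1.2, w2.2, w3.2, w4.2, w5.2, w6.2])
      all_goals
        obtain ⟨hat, htc⟩ : a < t ∧ t < c := by omega
        have g1 := hQ t
        have g2 := hQ' t
        rw [e3 t (by omega) (by omega)] at g2
        try rw [f3 t (by omega) (by omega)]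
        obtain ⟨g6, g4, -, g3, g7, -⟩ := hw.tri hat.ne htb hab.ne
        have g5 := hw t c htc.ne
        have g8 := hw c t htc.ne'
        clear hQ hQ' hw e3 f3 e1 e2 e4 f1 f2 f4
        subst hm hm'
        simp only [hab, hbc, hac, hat, htc, forall_true_left, lt_irrefl, false_imp_iff] at a1 a2 g1 g2
        rcases lt_or_gt_of_ne htb with hb | hb
        all_goals try (exfalso; omega)
        all_goals
          have hb' := hb.not_gt
          try simp only [hb, hb', forall_true_left, false_imp_iff] at g1 g2
          clear ht1 ht2 hb hb' hat hab hbc hac htb htc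
          generalize x t = xt at *
          generalize x a = xa at *
          generalize x b = xb at *
          generalize x c = xc at *
          simp only [dd] at *
          grind
    · clear hQ hQ' hw e3 f3
      simp only [dd] at *
      constructor <;> grind

theorem ex_T1 {n : ℕ} (r : ℝ) (x : Fin n → ℝ) (hw : Win r x) (a b c : Fin n)
    (hab : a < b) (hbc : b < c) (m m' : ℝ)
    (hm : m = dd r (x a) (x c)) (hm' : m' = dd r (sw x a c a) (sw x a c b))
    (hQ : QC r x a c) (hQ' : QC r (sw x a c) a b) :
    QC r x a b ∧ QC r (sw x a b) b c ∧ m + m' = dd r (x a) (x b) ∧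
      m = dd r (sw x a b b) (sw x a b c) :=
  ex_T r x hw a b c hab hbc m m' a c a b b a b b c c _ _
    (by simp) hm hm' hQ hQ'

theorem ex_T2 {n : ℕ} (r : ℝ) (x : Fin n → ℝ) (hw : Win r x) (a b c : Fin n)
    (hab : a < b) (hbc : b < c) (m m' : ℝ)
    (hm : m = dd r (x a) (x b)) (hm' : m' = dd r (sw x a b a) (sw x a b c))
    (hQ : QC r x a b) (hQ' : QC r (sw x a b) a c) :
    QC r x b c ∧ QC r (sw x b c) a b ∧ m' = dd r (x b) (x c) ∧
      m + m' = dd r (sw x b c a) (sw x b c b) :=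
  ex_T r x hw a b c hab hbc m m' a b a c c b c a b a _ _
    (by simp) hm hm' hQ hQ'

theorem ex_T3 {n : ℕ} (r : ℝ) (x : Fin n → ℝ) (hw : Win r x) (a b c : Fin n)
    (hab : a < b) (hbc : b < c) (m m' : ℝ)
    (hm : m = dd r (x a) (x c)) (hm' : m' = dd r (sw x a c b) (sw x a c c))
    (hQ : QC r x a c) (hQ' : QC r (sw x a c) b c) :
    QC r x b c ∧ QC r (sw x b c) a b ∧ m + m' = dd r (x b) (x c) ∧
      m = dd r (sw x b c a) (sw x b c b) :=
  ex_T r x hw a b c hab hbc m m' a c b c b b c a b a _ _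
    (by simp) hm hm' hQ hQ'

theorem ex_T4 {n : ℕ} (r : ℝ) (x : Fin n → ℝ) (hw : Win r x) (a b c : Fin n)
    (hab : a < b) (hbc : b < c) (m m' : ℝ)
    (hm : m = dd r (x b) (x c)) (hm' : m' = dd r (sw x b c a) (sw x b c c))
    (hQ : QC r x b c) (hQ' : QC r (sw x b c) a c) :
    QC r x a b ∧ QC r (sw x a b) b c ∧ m' = dd r (x a) (x b) ∧
      m + m' = dd r (sw x a b b) (sw x a b c) :=
  ex_T r x hw a b c hab hbc m m' b c a c a a b b c c _ _
    (by simp) hm hm' hQ hQ'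

theorem ex_T5 {n : ℕ} (r : ℝ) (x : Fin n → ℝ) (hw : Win r x) (a b c : Fin n)
    (hab : a < b) (hbc : b < c) (m m' : ℝ)
    (hm : m = dd r (x a) (x b)) (hm' : m' = dd r (sw x a b b) (sw x a b c)) (hlt : m' < m)
    (hQ : QC r x a b) (hQ' : QC r (sw x a b) b c) :
    QC r x a c ∧ QC r (sw x a c) a b ∧ m' = dd r (x a) (x c) ∧
      m - m' = dd r (sw x a c a) (sw x a c b) :=
  ex_T r x hw a b c hab hbc m m' a b b c c a c a b b _ _
    (by simp [hlt]) hm hm' hQ hQ'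

theorem ex_T6 {n : ℕ} (r : ℝ) (x : Fin n → ℝ) (hw : Win r x) (a b c : Fin n)
    (hab : a < b) (hbc : b < c) (m m' : ℝ)
    (hm : m = dd r (x a) (x b)) (hm' : m' = dd r (sw x a b b) (sw x a b c)) (hlt : m < m')
    (hQ : QC r x a b) (hQ' : QC r (sw x a b) b c) :
    QC r x b c ∧ QC r (sw x b c) a c ∧ m' - m = dd r (x b) (x c) ∧
      m = dd r (sw x b c a) (sw x b c c) :=
  ex_T r x hw a b c hab hbc m m' a b b c c b c a c a _ _
    (by simp [hlt]) hm hm' hQ hQ'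

theorem ex_T7 {n : ℕ} (r : ℝ) (x : Fin n → ℝ) (hw : Win r x) (a b c : Fin n)
    (hab : a < b) (hbc : b < c) (m m' : ℝ)
    (hm : m = dd r (x b) (x c)) (hm' : m' = dd r (sw x b c a) (sw x b c b)) (hlt : m' < m)
    (hQ : QC r x b c) (hQ' : QC r (sw x b c) a b) :
    QC r x a c ∧ QC r (sw x a c) b c ∧ m' = dd r (x a) (x c) ∧
      m - m' = dd r (sw x a c b) (sw x a c c) :=
  ex_T r x hw a b c hab hbc m m' b c a b a a c b c b _ _
    (by simp [hlt]) hm hm' hQ hQ'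

theorem ex_T8 {n : ℕ} (r : ℝ) (x : Fin n → ℝ) (hw : Win r x) (a b c : Fin n)
    (hab : a < b) (hbc : b < c) (m m' : ℝ)
    (hm : m = dd r (x b) (x c)) (hm' : m' = dd r (sw x b c a) (sw x b c b)) (hlt : m < m')
    (hQ : QC r x b c) (hQ' : QC r (sw x b c) a b) :
    QC r x a b ∧ QC r (sw x a b) a c ∧ m' - m = dd r (x a) (x b) ∧
      m = dd r (sw x a b a) (sw x a b c) :=
  ex_T r x hw a b c hab hbc m m' b c a b a a b a c c _ _
    (by simp [hlt]) hm hm' hQ hQ'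

theorem rootv_left {n : ℕ} (i j : Fin n) (h : i ≠ j) : rootv n i j i = 1 := by
  simp [rootv, h]
theorem rootv_right {n : ℕ} (i j : Fin n) (h : i ≠ j) : rootv n i j j = -1 := by
  simp [rootv, h.symm]
theorem rootv_other {n : ℕ} (i j t : Fin n) (h1 : t ≠ i) (h2 : t ≠ j) : rootv n i j t = 0 := by
  simp [rootv, h1, h2]

theorem dd_pos (r a b : ℝ) (h : b - a < r) : 0 < dd r a b := by
  unfold dd; split_ifs <;> linarith

theorem Win.pos {n : ℕ} {r : ℝ} {x : Fin n → ℝ} (hw : Win r x) (i j : Fin n) (h : i ≠ j) :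
    0 < dd r (x i) (x j) := dd_pos _ _ _ (hw j i h.symm).2

theorem dd_l {r p p' q u v : ℝ} (h : p ≠ p' ∧ p - p' < r) (h' : p' ≠ p ∧ p' - p < r)
    (hu : u = dd r p q) (hv : v = dd r p' q) (e : u = v) : False := by
  apply h.1
  unfold dd at hu hv
  split_ifs at hu hv <;> linarith [h.2, h'.2]

theorem dd_r {r p q q' u v : ℝ} (h : q ≠ q' ∧ q - q' < r) (h' : q' ≠ q ∧ q' - q < r)
    (hu : u = dd r p q) (hv : v = dd r p q') (e : u = v) : False := by
  apply h.1
  unfold dd at hu hv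
  split_ifs at hu hv <;> linarith [h.2, h'.2]

theorem Win.dd_l {n : ℕ} {r : ℝ} {x : Fin n → ℝ} (hw : Win r x) {p p' q : Fin n} (h : p ≠ p')
    {u v : ℝ} (hu : u = dd r (x p) (x q)) (hv : v = dd r (x p') (x q)) (e : u = v) : False :=
  _root_.dd_l (hw p p' h) (hw p' p h.symm) hu hv e

theorem Win.dd_r {n : ℕ} {r : ℝ} {x : Fin n → ℝ} (hw : Win r x) {p q q' : Fin n} (h : q ≠ q')
    {u v : ℝ} (hu : u = dd r (x p) (x q)) (hv : v = dd r (x p) (x q')) (e : u = v) : False :=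
  _root_.dd_r (hw q q' h) (hw q' q h.symm) hu hv e

/-- The roots in a second decomposition are supported on the same four indices. -/
theorem uniq4 {n : ℕ} (r : ℝ) (x : Fin n → ℝ) (hw : Win r x) (i j k l i' j' k' l' : Fin n)
    (hij : i < j) (hkl : k < l) (h1 : i ≠ k) (h2 : i ≠ l) (h3 : j ≠ k) (h4 : j ≠ l)
    (hij' : i' < j') (hkl' : k' < l') (m m' μ μ' : ℝ)
    (hm : m = dd r (x i) (x j)) (hm' : m' = dd r (sw x i j k) (sw x i j l))
    (hμ : μ = dd r (x i') (x j')) (hμ' : μ' = dd r (sw x i' j' k') (sw x i' j' l'))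
    (E : ∀ t, m * rootv n i j t + m' * rootv n k l t =
      μ * rootv n i' j' t + μ' * rootv n k' l' t)
    (hne : ¬ (i' = i ∧ j' = j)) : i' = k ∧ j' = l ∧ k' = i ∧ l' = j := by
  have pm : 0 < m := hm ▸ hw.pos i j hij.ne
  have pm' : 0 < m' := hm' ▸ (hw.sw i j).pos k l hkl.ne
  have pμ : 0 < μ := hμ ▸ hw.pos i' j' hij'.ne
  have pμ' : 0 < μ' := hμ' ▸ (hw.sw i' j').pos k' l' hkl'.ne
  have src : ∀ t, 0 < μ * rootv n i' j' t + μ' * rootv n k' l' t → t = i' ∨ t = k' := by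
    intro t ht
    by_contra hh
    push Not at hh
    simp only [rootv, hh.1, hh.2, if_false] at ht
    split_ifs at ht <;> linarith
  have snk : ∀ t, μ * rootv n i' j' t + μ' * rootv n k' l' t < 0 → t = j' ∨ t = l' := by
    intro t ht
    by_contra hh
    push Not at hh
    simp only [rootv, hh.1, hh.2, if_false] at ht
    split_ifs at ht <;> linarith
  have s1 := src i (by
    rw [← E i, rootv_left i j hij.ne, rootv_other k l i h1 h2]; linarith)
  have s2 := src k (by
    rw [← E k, rootv_left k l hkl.ne, rootv_other i j k h1.symm h3.symm]; linarith)
  have s3 := snk j (by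
    rw [← E j, rootv_right i j hij.ne, rootv_other k l j h3 h4]; linarith)
  have s4 := snk l (by
    rw [← E l, rootv_right k l hkl.ne, rootv_other i j l h2.symm h4.symm]; linarith)
  have hE := E i
  rw [rootv_left i j hij.ne, rootv_other k l i h1 h2] at hE
  have hE2 := E k
  rw [rootv_left k l hkl.ne, rootv_other i j k h1.symm h3.symm] at hE2
  have w1 := hw j l h4
  have w2 := hw l j h4.symm
  rcases s1 with rfl | rfl
  · have hk : k = k' := by grind
    subst hk
    have hj : j' = l := by grind
    subst hj
    have hl : l' = j := by grind
    subst hl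
    rw [rootv_left i j' hij'.ne, rootv_other k l' i h1 hij.ne] at hE
    simp only [dd] at *
    grind
  · have hk : k = i' := by grind
    subst hk
    rcases s3 with rfl | rfl
    · have hl : l = l' := by grind
      subst hl
      rw [rootv_left i l hkl'.ne, rootv_other k j i h1 hij.ne] at hE
      rw [rootv_left k j hij'.ne, rootv_other i l k h1.symm hkl.ne] at hE2
      rw [sw_other x i j k h1.symm h3.symm, sw_other x i j l h2.symm h4.symm] at hm'
      simp only [dd] at *
      grind
    · grind

theorem uniq3 {n : ℕ} (a b c i' j' k' l' : Fin n) (hab : a < b) (hbc : b < c)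
    (hij' : i' < j') (hkl' : k' < l') (A B C μ μ' : ℝ) (hA : A ≠ 0) (hB : B ≠ 0) (hC : C ≠ 0)
    (pμ : 0 < μ) (pμ' : 0 < μ') (F : Fin n → ℝ) (Fa : F a = A) (Fb : F b = B) (Fc : F c = C)
    (F0 : ∀ t, t ≠ a → t ≠ b → t ≠ c → F t = 0)
    (E : ∀ t, F t = μ * rootv n i' j' t + μ' * rootv n k' l' t) :
    ((i' = a ∧ j' = b) ∨ (i' = a ∧ j' = c) ∨ (i' = b ∧ j' = c)) ∧
    ((k' = a ∧ l' = b) ∨ (k' = a ∧ l' = c) ∨ (k' = b ∧ l' = c)) := by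
  have mem : ∀ t, F t ≠ 0 → t = i' ∨ t = j' ∨ t = k' ∨ t = l' := by
    intro t ht
    by_contra hh
    push Not at hh
    apply ht
    rw [E t, rootv_other _ _ _ hh.1 hh.2.1, rootv_other _ _ _ hh.2.2.1 hh.2.2.2]
    ring
  have ma := mem a (by rwa [Fa])
  have mb := mem b (by rwa [Fb])
  have mc := mem c (by rwa [Fc])
  have key : ∀ t, t = i' ∨ t = j' ∨ t = k' ∨ t = l' → t = a ∨ t = b ∨ t = c := by
    intro t ht
    by_contra hh
    push Not at hh
    have h0 := E t
    rw [F0 t hh.1 hh.2.1 hh.2.2] at h0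
    simp only [rootv] at h0
    have : (t = i' ∧ t = l') ∨ (t = j' ∧ t = k') := by
      clear E F0 Fa Fb Fc mem ma mb mc
      split_ifs at h0 <;> first | grind | (exfalso; linarith)
    grind
  have k1 := key i' (by simp)
  have k2 := key j' (by simp)
  have k3 := key k' (by simp)
  have k4 := key l' (by simp)
  clear E F0 key mem
  constructor
  · grind
  · grind


set_option maxHeartbeats 2000000 in
theorem uq_T1 {n : ℕ} (r : ℝ) (x : Fin n → ℝ) (hw : Win r x) (a b c : Fin n)
    (hab : a < b) (hbc : b < c) (i' j' k' l' : Fin n)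
    (hij' : i' < j') (hkl' : k' < l') (m m' μ μ' : ℝ)
    (hm : m = dd r (x a) (x c)) (hm' : m' = dd r (sw x a c a) (sw x a c b))
    (hμ : μ = dd r (x i') (x j')) (hμ' : μ' = dd r (sw x i' j' k') (sw x i' j' l'))
    (E : ∀ t, m * rootv n a c t + m' * rootv n a b t =
      μ * rootv n i' j' t + μ' * rootv n k' l' t)
    (hne : ¬ (i' = a ∧ j' = c)) :
    i' = a ∧ j' = b ∧ k' = b ∧ l' = c := by
  have hac := hab.trans hbc
  have pm : 0 < m := hm ▸ hw.pos a c (by omega)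
  have pm' : 0 < m' := hm' ▸ (hw.sw a c).pos a b (by omega)
  have pμ : 0 < μ := hμ ▸ hw.pos i' j' hij'.ne
  have pμ' : 0 < μ' := hμ' ▸ (hw.sw i' j').pos k' l' hkl'.ne
  have Fa : m * rootv n a c a + m' * rootv n a b a = (m + m') := by
    simp [rootv, hab.ne, hac.ne]
  have Fb : m * rootv n a c b + m' * rootv n a b b = (-m') := by
    simp [rootv, hab.ne', hbc.ne]
  have Fc : m * rootv n a c c + m' * rootv n a b c = (-m) := by
    simp [rootv, hac.ne', hbc.ne']
  have U := uniq3 a b c i' j' k' l' hab hbc hij' hkl' _ _ _ μ μ'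
    (by intro h; linarith) (by intro h; linarith) (by intro h; linarith) pμ pμ'
    _ Fa Fb Fc (by intro t h1 h2 h3; simp [rootv, h1, h2, h3]) E
  have e1 := sw_left x a c
  have e2 := sw_right x a c
  have e4 := sw_other x a c b (by omega) (by omega)
  have Ea := Fa.symm.trans (E a)
  have Eb := Fb.symm.trans (E b)
  have Ec := Fc.symm.trans (E c)
  clear E Fa Fb Fc hij' hkl'
  simp only [e1, e2, e4] at hm'
  obtain ⟨U1, U2⟩ := U
  rcases U1 with ⟨rfl, rfl⟩ | ⟨rfl, rfl⟩ | ⟨rfl, rfl⟩ <;>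
    rcases U2 with ⟨rfl, rfl⟩ | ⟨rfl, rfl⟩ | ⟨rfl, rfl⟩ <;>
    first
    | exact ⟨rfl, rfl, rfl, rfl⟩
    | (exact absurd ⟨rfl, rfl⟩ hne)
    | (exfalso
       simp [rootv, hab.ne, hab.ne', hac.ne, hac.ne', hbc.ne, hbc.ne'] at Ea Eb Ec
       linarith)
    | (exfalso
       simp [rootv, hab.ne, hab.ne', hac.ne, hac.ne', hbc.ne, hbc.ne'] at Ea Eb Ec
       first
       | exact hw.dd_l (by omega) hμ hm (by linarith)
       | exact hw.dd_l (by omega) hμ hm' (by linarith)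
       | exact hw.dd_r (by omega) hμ hm (by linarith)
       | exact hw.dd_r (by omega) hμ hm' (by linarith))

set_option maxHeartbeats 2000000 in
theorem uq_T2 {n : ℕ} (r : ℝ) (x : Fin n → ℝ) (hw : Win r x) (a b c : Fin n)
    (hab : a < b) (hbc : b < c) (i' j' k' l' : Fin n)
    (hij' : i' < j') (hkl' : k' < l') (m m' μ μ' : ℝ)
    (hm : m = dd r (x a) (x b)) (hm' : m' = dd r (sw x a b a) (sw x a b c))
    (hμ : μ = dd r (x i') (x j')) (hμ' : μ' = dd r (sw x i' j' k') (sw x i' j' l'))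
    (E : ∀ t, m * rootv n a b t + m' * rootv n a c t =
      μ * rootv n i' j' t + μ' * rootv n k' l' t)
    (hne : ¬ (i' = a ∧ j' = b)) :
    i' = b ∧ j' = c ∧ k' = a ∧ l' = b := by
  have hac := hab.trans hbc
  have pm : 0 < m := hm ▸ hw.pos a b (by omega)
  have pm' : 0 < m' := hm' ▸ (hw.sw a b).pos a c (by omega)
  have pμ : 0 < μ := hμ ▸ hw.pos i' j' hij'.ne
  have pμ' : 0 < μ' := hμ' ▸ (hw.sw i' j').pos k' l' hkl'.ne
  have Fa : m * rootv n a b a + m' * rootv n a c a = (m + m') := by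
    simp [rootv, hab.ne, hac.ne]
  have Fb : m * rootv n a b b + m' * rootv n a c b = (-m) := by
    simp [rootv, hab.ne', hbc.ne]
  have Fc : m * rootv n a b c + m' * rootv n a c c = (-m') := by
    simp [rootv, hac.ne', hbc.ne']
  have U := uniq3 a b c i' j' k' l' hab hbc hij' hkl' _ _ _ μ μ'
    (by intro h; linarith) (by intro h; linarith) (by intro h; linarith) pμ pμ'
    _ Fa Fb Fc (by intro t h1 h2 h3; simp [rootv, h1, h2, h3]) E
  have e1 := sw_left x a b
  have e2 := sw_right x a b
  have e4 := sw_other x a b c (by omega) (by omega)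
  have Ea := Fa.symm.trans (E a)
  have Eb := Fb.symm.trans (E b)
  have Ec := Fc.symm.trans (E c)
  clear E Fa Fb Fc hij' hkl'
  simp only [e1, e2, e4] at hm'
  obtain ⟨U1, U2⟩ := U
  rcases U1 with ⟨rfl, rfl⟩ | ⟨rfl, rfl⟩ | ⟨rfl, rfl⟩ <;>
    rcases U2 with ⟨rfl, rfl⟩ | ⟨rfl, rfl⟩ | ⟨rfl, rfl⟩ <;>
    first
    | exact ⟨rfl, rfl, rfl, rfl⟩
    | (exact absurd ⟨rfl, rfl⟩ hne)
    | (exfalso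
       simp [rootv, hab.ne, hab.ne', hac.ne, hac.ne', hbc.ne, hbc.ne'] at Ea Eb Ec
       linarith)
    | (exfalso
       simp [rootv, hab.ne, hab.ne', hac.ne, hac.ne', hbc.ne, hbc.ne'] at Ea Eb Ec
       first
       | exact hw.dd_l (by omega) hμ hm (by linarith)
       | exact hw.dd_l (by omega) hμ hm' (by linarith)
       | exact hw.dd_r (by omega) hμ hm (by linarith)
       | exact hw.dd_r (by omega) hμ hm' (by linarith))

set_option maxHeartbeats 2000000 in
theorem uq_T3 {n : ℕ} (r : ℝ) (x : Fin n → ℝ) (hw : Win r x) (a b c : Fin n)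
    (hab : a < b) (hbc : b < c) (i' j' k' l' : Fin n)
    (hij' : i' < j') (hkl' : k' < l') (m m' μ μ' : ℝ)
    (hm : m = dd r (x a) (x c)) (hm' : m' = dd r (sw x a c b) (sw x a c c))
    (hμ : μ = dd r (x i') (x j')) (hμ' : μ' = dd r (sw x i' j' k') (sw x i' j' l'))
    (E : ∀ t, m * rootv n a c t + m' * rootv n b c t =
      μ * rootv n i' j' t + μ' * rootv n k' l' t)
    (hne : ¬ (i' = a ∧ j' = c)) :
    i' = b ∧ j' = c ∧ k' = a ∧ l' = b := by
  have hac := hab.trans hbc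
  have pm : 0 < m := hm ▸ hw.pos a c (by omega)
  have pm' : 0 < m' := hm' ▸ (hw.sw a c).pos b c (by omega)
  have pμ : 0 < μ := hμ ▸ hw.pos i' j' hij'.ne
  have pμ' : 0 < μ' := hμ' ▸ (hw.sw i' j').pos k' l' hkl'.ne
  have Fa : m * rootv n a c a + m' * rootv n b c a = (m) := by
    simp [rootv, hab.ne, hac.ne]
  have Fb : m * rootv n a c b + m' * rootv n b c b = (m') := by
    simp [rootv, hab.ne', hbc.ne]
  have Fc : m * rootv n a c c + m' * rootv n b c c = (-m + -m') := by
    simp [rootv, hac.ne', hbc.ne']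
  have U := uniq3 a b c i' j' k' l' hab hbc hij' hkl' _ _ _ μ μ'
    (by intro h; linarith) (by intro h; linarith) (by intro h; linarith) pμ pμ'
    _ Fa Fb Fc (by intro t h1 h2 h3; simp [rootv, h1, h2, h3]) E
  have e1 := sw_left x a c
  have e2 := sw_right x a c
  have e4 := sw_other x a c b (by omega) (by omega)
  have Ea := Fa.symm.trans (E a)
  have Eb := Fb.symm.trans (E b)
  have Ec := Fc.symm.trans (E c)
  clear E Fa Fb Fc hij' hkl'
  simp only [e1, e2, e4] at hm'
  obtain ⟨U1, U2⟩ := U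
  rcases U1 with ⟨rfl, rfl⟩ | ⟨rfl, rfl⟩ | ⟨rfl, rfl⟩ <;>
    rcases U2 with ⟨rfl, rfl⟩ | ⟨rfl, rfl⟩ | ⟨rfl, rfl⟩ <;>
    first
    | exact ⟨rfl, rfl, rfl, rfl⟩
    | (exact absurd ⟨rfl, rfl⟩ hne)
    | (exfalso
       simp [rootv, hab.ne, hab.ne', hac.ne, hac.ne', hbc.ne, hbc.ne'] at Ea Eb Ec
       linarith)
    | (exfalso
       simp [rootv, hab.ne, hab.ne', hac.ne, hac.ne', hbc.ne, hbc.ne'] at Ea Eb Ec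
       first
       | exact hw.dd_l (by omega) hμ hm (by linarith)
       | exact hw.dd_l (by omega) hμ hm' (by linarith)
       | exact hw.dd_r (by omega) hμ hm (by linarith)
       | exact hw.dd_r (by omega) hμ hm' (by linarith))

set_option maxHeartbeats 2000000 in
theorem uq_T4 {n : ℕ} (r : ℝ) (x : Fin n → ℝ) (hw : Win r x) (a b c : Fin n)
    (hab : a < b) (hbc : b < c) (i' j' k' l' : Fin n)
    (hij' : i' < j') (hkl' : k' < l') (m m' μ μ' : ℝ)
    (hm : m = dd r (x b) (x c)) (hm' : m' = dd r (sw x b c a) (sw x b c c))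
    (hμ : μ = dd r (x i') (x j')) (hμ' : μ' = dd r (sw x i' j' k') (sw x i' j' l'))
    (E : ∀ t, m * rootv n b c t + m' * rootv n a c t =
      μ * rootv n i' j' t + μ' * rootv n k' l' t)
    (hne : ¬ (i' = b ∧ j' = c)) :
    i' = a ∧ j' = b ∧ k' = b ∧ l' = c := by
  have hac := hab.trans hbc
  have pm : 0 < m := hm ▸ hw.pos b c (by omega)
  have pm' : 0 < m' := hm' ▸ (hw.sw b c).pos a c (by omega)
  have pμ : 0 < μ := hμ ▸ hw.pos i' j' hij'.ne
  have pμ' : 0 < μ' := hμ' ▸ (hw.sw i' j').pos k' l' hkl'.ne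
  have Fa : m * rootv n b c a + m' * rootv n a c a = (m') := by
    simp [rootv, hab.ne, hac.ne]
  have Fb : m * rootv n b c b + m' * rootv n a c b = (m) := by
    simp [rootv, hab.ne', hbc.ne]
  have Fc : m * rootv n b c c + m' * rootv n a c c = (-m + -m') := by
    simp [rootv, hac.ne', hbc.ne']
  have U := uniq3 a b c i' j' k' l' hab hbc hij' hkl' _ _ _ μ μ'
    (by intro h; linarith) (by intro h; linarith) (by intro h; linarith) pμ pμ'
    _ Fa Fb Fc (by intro t h1 h2 h3; simp [rootv, h1, h2, h3]) E
  have e1 := sw_left x b c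
  have e2 := sw_right x b c
  have e4 := sw_other x b c a (by omega) (by omega)
  have Ea := Fa.symm.trans (E a)
  have Eb := Fb.symm.trans (E b)
  have Ec := Fc.symm.trans (E c)
  clear E Fa Fb Fc hij' hkl'
  simp only [e1, e2, e4] at hm'
  obtain ⟨U1, U2⟩ := U
  rcases U1 with ⟨rfl, rfl⟩ | ⟨rfl, rfl⟩ | ⟨rfl, rfl⟩ <;>
    rcases U2 with ⟨rfl, rfl⟩ | ⟨rfl, rfl⟩ | ⟨rfl, rfl⟩ <;>
    first
    | exact ⟨rfl, rfl, rfl, rfl⟩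
    | (exact absurd ⟨rfl, rfl⟩ hne)
    | (exfalso
       simp [rootv, hab.ne, hab.ne', hac.ne, hac.ne', hbc.ne, hbc.ne'] at Ea Eb Ec
       linarith)
    | (exfalso
       simp [rootv, hab.ne, hab.ne', hac.ne, hac.ne', hbc.ne, hbc.ne'] at Ea Eb Ec
       first
       | exact hw.dd_l (by omega) hμ hm (by linarith)
       | exact hw.dd_l (by omega) hμ hm' (by linarith)
       | exact hw.dd_r (by omega) hμ hm (by linarith)
       | exact hw.dd_r (by omega) hμ hm' (by linarith))

set_option maxHeartbeats 2000000 in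
theorem uq_T5 {n : ℕ} (r : ℝ) (x : Fin n → ℝ) (hw : Win r x) (a b c : Fin n)
    (hab : a < b) (hbc : b < c) (i' j' k' l' : Fin n)
    (hij' : i' < j') (hkl' : k' < l') (m m' μ μ' : ℝ)
    (hm : m = dd r (x a) (x b)) (hm' : m' = dd r (sw x a b b) (sw x a b c)) (hlt : m' < m)
    (hμ : μ = dd r (x i') (x j')) (hμ' : μ' = dd r (sw x i' j' k') (sw x i' j' l'))
    (E : ∀ t, m * rootv n a b t + m' * rootv n b c t =
      μ * rootv n i' j' t + μ' * rootv n k' l' t)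
    (hne : ¬ (i' = a ∧ j' = b)) :
    i' = a ∧ j' = c ∧ k' = a ∧ l' = b := by
  have hac := hab.trans hbc
  have pm : 0 < m := hm ▸ hw.pos a b (by omega)
  have pm' : 0 < m' := hm' ▸ (hw.sw a b).pos b c (by omega)
  have pμ : 0 < μ := hμ ▸ hw.pos i' j' hij'.ne
  have pμ' : 0 < μ' := hμ' ▸ (hw.sw i' j').pos k' l' hkl'.ne
  have Fa : m * rootv n a b a + m' * rootv n b c a = (m) := by
    simp [rootv, hab.ne, hac.ne]
  have Fb : m * rootv n a b b + m' * rootv n b c b = (-m + m') := by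
    simp [rootv, hab.ne', hbc.ne]
  have Fc : m * rootv n a b c + m' * rootv n b c c = (-m') := by
    simp [rootv, hac.ne', hbc.ne']
  have U := uniq3 a b c i' j' k' l' hab hbc hij' hkl' _ _ _ μ μ'
    (by intro h; linarith) (by intro h; linarith) (by intro h; linarith) pμ pμ'
    _ Fa Fb Fc (by intro t h1 h2 h3; simp [rootv, h1, h2, h3]) E
  have e1 := sw_left x a b
  have e2 := sw_right x a b
  have e4 := sw_other x a b c (by omega) (by omega)
  have Ea := Fa.symm.trans (E a)
  have Eb := Fb.symm.trans (E b)
  have Ec := Fc.symm.trans (E c)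
  clear E Fa Fb Fc hij' hkl'
  simp only [e1, e2, e4] at hm'
  obtain ⟨U1, U2⟩ := U
  rcases U1 with ⟨rfl, rfl⟩ | ⟨rfl, rfl⟩ | ⟨rfl, rfl⟩ <;>
    rcases U2 with ⟨rfl, rfl⟩ | ⟨rfl, rfl⟩ | ⟨rfl, rfl⟩ <;>
    first
    | exact ⟨rfl, rfl, rfl, rfl⟩
    | (exact absurd ⟨rfl, rfl⟩ hne)
    | (exfalso
       simp [rootv, hab.ne, hab.ne', hac.ne, hac.ne', hbc.ne, hbc.ne'] at Ea Eb Ec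
       linarith)
    | (exfalso
       simp [rootv, hab.ne, hab.ne', hac.ne, hac.ne', hbc.ne, hbc.ne'] at Ea Eb Ec
       first
       | exact hw.dd_l (by omega) hμ hm (by linarith)
       | exact hw.dd_l (by omega) hμ hm' (by linarith)
       | exact hw.dd_r (by omega) hμ hm (by linarith)
       | exact hw.dd_r (by omega) hμ hm' (by linarith))

set_option maxHeartbeats 2000000 in
theorem uq_T6 {n : ℕ} (r : ℝ) (x : Fin n → ℝ) (hw : Win r x) (a b c : Fin n)
    (hab : a < b) (hbc : b < c) (i' j' k' l' : Fin n)
    (hij' : i' < j') (hkl' : k' < l') (m m' μ μ' : ℝ)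
    (hm : m = dd r (x a) (x b)) (hm' : m' = dd r (sw x a b b) (sw x a b c)) (hlt : m < m')
    (hμ : μ = dd r (x i') (x j')) (hμ' : μ' = dd r (sw x i' j' k') (sw x i' j' l'))
    (E : ∀ t, m * rootv n a b t + m' * rootv n b c t =
      μ * rootv n i' j' t + μ' * rootv n k' l' t)
    (hne : ¬ (i' = a ∧ j' = b)) :
    i' = b ∧ j' = c ∧ k' = a ∧ l' = c := by
  have hac := hab.trans hbc
  have pm : 0 < m := hm ▸ hw.pos a b (by omega)
  have pm' : 0 < m' := hm' ▸ (hw.sw a b).pos b c (by omega)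
  have pμ : 0 < μ := hμ ▸ hw.pos i' j' hij'.ne
  have pμ' : 0 < μ' := hμ' ▸ (hw.sw i' j').pos k' l' hkl'.ne
  have Fa : m * rootv n a b a + m' * rootv n b c a = (m) := by
    simp [rootv, hab.ne, hac.ne]
  have Fb : m * rootv n a b b + m' * rootv n b c b = (-m + m') := by
    simp [rootv, hab.ne', hbc.ne]
  have Fc : m * rootv n a b c + m' * rootv n b c c = (-m') := by
    simp [rootv, hac.ne', hbc.ne']
  have U := uniq3 a b c i' j' k' l' hab hbc hij' hkl' _ _ _ μ μ'
    (by intro h; linarith) (by intro h; linarith) (by intro h; linarith) pμ pμ'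
    _ Fa Fb Fc (by intro t h1 h2 h3; simp [rootv, h1, h2, h3]) E
  have e1 := sw_left x a b
  have e2 := sw_right x a b
  have e4 := sw_other x a b c (by omega) (by omega)
  have Ea := Fa.symm.trans (E a)
  have Eb := Fb.symm.trans (E b)
  have Ec := Fc.symm.trans (E c)
  clear E Fa Fb Fc hij' hkl'
  simp only [e1, e2, e4] at hm'
  obtain ⟨U1, U2⟩ := U
  rcases U1 with ⟨rfl, rfl⟩ | ⟨rfl, rfl⟩ | ⟨rfl, rfl⟩ <;>
    rcases U2 with ⟨rfl, rfl⟩ | ⟨rfl, rfl⟩ | ⟨rfl, rfl⟩ <;>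
    first
    | exact ⟨rfl, rfl, rfl, rfl⟩
    | (exact absurd ⟨rfl, rfl⟩ hne)
    | (exfalso
       simp [rootv, hab.ne, hab.ne', hac.ne, hac.ne', hbc.ne, hbc.ne'] at Ea Eb Ec
       linarith)
    | (exfalso
       simp [rootv, hab.ne, hab.ne', hac.ne, hac.ne', hbc.ne, hbc.ne'] at Ea Eb Ec
       first
       | exact hw.dd_l (by omega) hμ hm (by linarith)
       | exact hw.dd_l (by omega) hμ hm' (by linarith)
       | exact hw.dd_r (by omega) hμ hm (by linarith)
       | exact hw.dd_r (by omega) hμ hm' (by linarith))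

set_option maxHeartbeats 2000000 in
theorem uq_T7 {n : ℕ} (r : ℝ) (x : Fin n → ℝ) (hw : Win r x) (a b c : Fin n)
    (hab : a < b) (hbc : b < c) (i' j' k' l' : Fin n)
    (hij' : i' < j') (hkl' : k' < l') (m m' μ μ' : ℝ)
    (hm : m = dd r (x b) (x c)) (hm' : m' = dd r (sw x b c a) (sw x b c b)) (hlt : m' < m)
    (hμ : μ = dd r (x i') (x j')) (hμ' : μ' = dd r (sw x i' j' k') (sw x i' j' l'))
    (E : ∀ t, m * rootv n b c t + m' * rootv n a b t =
      μ * rootv n i' j' t + μ' * rootv n k' l' t)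
    (hne : ¬ (i' = b ∧ j' = c)) :
    i' = a ∧ j' = c ∧ k' = b ∧ l' = c := by
  have hac := hab.trans hbc
  have pm : 0 < m := hm ▸ hw.pos b c (by omega)
  have pm' : 0 < m' := hm' ▸ (hw.sw b c).pos a b (by omega)
  have pμ : 0 < μ := hμ ▸ hw.pos i' j' hij'.ne
  have pμ' : 0 < μ' := hμ' ▸ (hw.sw i' j').pos k' l' hkl'.ne
  have Fa : m * rootv n b c a + m' * rootv n a b a = (m') := by
    simp [rootv, hab.ne, hac.ne]
  have Fb : m * rootv n b c b + m' * rootv n a b b = (m + -m') := by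
    simp [rootv, hab.ne', hbc.ne]
  have Fc : m * rootv n b c c + m' * rootv n a b c = (-m) := by
    simp [rootv, hac.ne', hbc.ne']
  have U := uniq3 a b c i' j' k' l' hab hbc hij' hkl' _ _ _ μ μ'
    (by intro h; linarith) (by intro h; linarith) (by intro h; linarith) pμ pμ'
    _ Fa Fb Fc (by intro t h1 h2 h3; simp [rootv, h1, h2, h3]) E
  have e1 := sw_left x b c
  have e2 := sw_right x b c
  have e4 := sw_other x b c a (by omega) (by omega)
  have Ea := Fa.symm.trans (E a)
  have Eb := Fb.symm.trans (E b)
  have Ec := Fc.symm.trans (E c)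
  clear E Fa Fb Fc hij' hkl'
  simp only [e1, e2, e4] at hm'
  obtain ⟨U1, U2⟩ := U
  rcases U1 with ⟨rfl, rfl⟩ | ⟨rfl, rfl⟩ | ⟨rfl, rfl⟩ <;>
    rcases U2 with ⟨rfl, rfl⟩ | ⟨rfl, rfl⟩ | ⟨rfl, rfl⟩ <;>
    first
    | exact ⟨rfl, rfl, rfl, rfl⟩
    | (exact absurd ⟨rfl, rfl⟩ hne)
    | (exfalso
       simp [rootv, hab.ne, hab.ne', hac.ne, hac.ne', hbc.ne, hbc.ne'] at Ea Eb Ec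
       linarith)
    | (exfalso
       simp [rootv, hab.ne, hab.ne', hac.ne, hac.ne', hbc.ne, hbc.ne'] at Ea Eb Ec
       first
       | exact hw.dd_l (by omega) hμ hm (by linarith)
       | exact hw.dd_l (by omega) hμ hm' (by linarith)
       | exact hw.dd_r (by omega) hμ hm (by linarith)
       | exact hw.dd_r (by omega) hμ hm' (by linarith))

set_option maxHeartbeats 2000000 in
theorem uq_T8 {n : ℕ} (r : ℝ) (x : Fin n → ℝ) (hw : Win r x) (a b c : Fin n)
    (hab : a < b) (hbc : b < c) (i' j' k' l' : Fin n)
    (hij' : i' < j') (hkl' : k' < l') (m m' μ μ' : ℝ)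
    (hm : m = dd r (x b) (x c)) (hm' : m' = dd r (sw x b c a) (sw x b c b)) (hlt : m < m')
    (hμ : μ = dd r (x i') (x j')) (hμ' : μ' = dd r (sw x i' j' k') (sw x i' j' l'))
    (E : ∀ t, m * rootv n b c t + m' * rootv n a b t =
      μ * rootv n i' j' t + μ' * rootv n k' l' t)
    (hne : ¬ (i' = b ∧ j' = c)) :
    i' = a ∧ j' = b ∧ k' = a ∧ l' = c := by
  have hac := hab.trans hbc
  have pm : 0 < m := hm ▸ hw.pos b c (by omega)
  have pm' : 0 < m' := hm' ▸ (hw.sw b c).pos a b (by omega)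
  have pμ : 0 < μ := hμ ▸ hw.pos i' j' hij'.ne
  have pμ' : 0 < μ' := hμ' ▸ (hw.sw i' j').pos k' l' hkl'.ne
  have Fa : m * rootv n b c a + m' * rootv n a b a = (m') := by
    simp [rootv, hab.ne, hac.ne]
  have Fb : m * rootv n b c b + m' * rootv n a b b = (m + -m') := by
    simp [rootv, hab.ne', hbc.ne]
  have Fc : m * rootv n b c c + m' * rootv n a b c = (-m) := by
    simp [rootv, hac.ne', hbc.ne']
  have U := uniq3 a b c i' j' k' l' hab hbc hij' hkl' _ _ _ μ μ'
    (by intro h; linarith) (by intro h; linarith) (by intro h; linarith) pμ pμ'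
    _ Fa Fb Fc (by intro t h1 h2 h3; simp [rootv, h1, h2, h3]) E
  have e1 := sw_left x b c
  have e2 := sw_right x b c
  have e4 := sw_other x b c a (by omega) (by omega)
  have Ea := Fa.symm.trans (E a)
  have Eb := Fb.symm.trans (E b)
  have Ec := Fc.symm.trans (E c)
  clear E Fa Fb Fc hij' hkl'
  simp only [e1, e2, e4] at hm'
  obtain ⟨U1, U2⟩ := U
  rcases U1 with ⟨rfl, rfl⟩ | ⟨rfl, rfl⟩ | ⟨rfl, rfl⟩ <;>
    rcases U2 with ⟨rfl, rfl⟩ | ⟨rfl, rfl⟩ | ⟨rfl, rfl⟩ <;>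
    first
    | exact ⟨rfl, rfl, rfl, rfl⟩
    | (exact absurd ⟨rfl, rfl⟩ hne)
    | (exfalso
       simp [rootv, hab.ne, hab.ne', hac.ne, hac.ne', hbc.ne, hbc.ne'] at Ea Eb Ec
       linarith)
    | (exfalso
       simp [rootv, hab.ne, hab.ne', hac.ne, hac.ne', hbc.ne, hbc.ne'] at Ea Eb Ec
       first
       | exact hw.dd_l (by omega) hμ hm (by linarith)
       | exact hw.dd_l (by omega) hμ hm' (by linarith)
       | exact hw.dd_r (by omega) hμ hm (by linarith)
       | exact hw.dd_r (by omega) hμ hm' (by linarith))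

theorem root_sub {n : ℕ} (i j k l p q : Fin n) (hij : i < j) (hkl : k < l)
    (hne : ¬(i = k ∧ j = l)) (hpq : p < q)
    (h : (fun t => rootv n i j t - rootv n k l t) = rootv n p q) :
    (i = k ∧ p = l ∧ q = j) ∨ (j = l ∧ p = i ∧ q = k) := by
  have hi := congrFun h i
  have hj := congrFun h j
  have hk := congrFun h k
  have hl := congrFun h l
  clear h
  simp only [rootv, if_true, hij.ne, hij.ne', hkl.ne, hkl.ne', if_false] at *
  grind (splits := 30)

theorem root_add {n : ℕ} (i j k l p q : Fin n) (hij : i < j) (hkl : k < l) (hpq : p < q)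
    (h : (fun t => rootv n i j t + rootv n k l t) = rootv n p q) :
    (j = k ∧ p = i ∧ q = l) ∨ (i = l ∧ p = k ∧ q = j) := by
  have hi := congrFun h i
  have hj := congrFun h j
  have hk := congrFun h k
  have hl := congrFun h l
  clear h
  simp only [rootv, if_true, hij.ne, hij.ne', hkl.ne, hkl.ne', if_false] at *
  grind (splits := 30)

theorem pairing_zero {n : ℕ} (i j k l : Fin n) (hij : i < j) (hkl : k < l)
    (hne : ¬(i = k ∧ j = l)) (h : pairing (rootv n i j) (rootv n k l) = 0) :
    i ≠ k ∧ i ≠ l ∧ j ≠ k ∧ j ≠ l := by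
  have h' : pairing (rootv n i j) (rootv n k l) = rootv n k l i - rootv n k l j := by
    unfold pairing
    have : ∀ t, rootv n i j t * rootv n k l t =
        (if t = i then rootv n k l t else 0) - (if t = j then rootv n k l t else 0) := by
      intro t
      conv_lhs => rw [rootv]
      split_ifs <;> ring
    simp [this, Finset.sum_sub_distrib]
  rw [h'] at h
  simp only [rootv] at h
  grind

set_option maxHeartbeats 2000000 in
/-- Commutative squares (Theorem on `d² = 0` configurations).
Suppose `λ` is in the affine orbit of a strictly dominant `Λ`, `α = ε_i - ε_j` and
`β = ε_k - ε_l` are positive roots with `(α,β) ≠ 2` (i.e. `α ≠ β`), and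
`(λ, λ^α, λ^{α,β})` is admissible with `m = m_α(λ)`, `m' = m_β(λ^α)`.  Then there
is a unique pair of positive roots `(α', β')` with `α' ≠ α` such that
`(λ, λ^{α'}, λ^{α',β'})` is admissible and `λ^{α',β'} = λ^{α,β}`.  Explicitly:
if `(α,β) = 0` then `(α',β') = (β,α)`; if `(α,β) = 1` then `(α',β') = (β, α-β)`
or `(β-α, α)` according to which difference is a positive root; if `(α,β) = -1`
then `(α',β') = (α+β, α)` if `m > m'` and `(β, α+β)` if `m < m'`. -/
theorem stmt9 (n : ℕ) (r : ℤ) (hr : (n : ℤ) + 2 ≤ r) (Λ : Fin n → ℝ)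
    (hΛ : ∀ a b : Fin n, a < b → 0 < Λ a - Λ b ∧ Λ a - Λ b < (r : ℝ))
    (σ : Equiv.Perm (Fin n)) (γ : Fin n → ℤ) (hγ : (∑ t, γ t) = 0)
    (lam : Fin n → ℝ) (hlam : lam = fun t => Λ (σ.symm t) + (r : ℝ) * (γ t : ℝ))
    (i j k l : Fin n) (hij : i < j) (hkl : k < l)
    (hne : ¬(i = k ∧ j = l))
    (m m' : ℤ)
    (hm : isM r lam (rootv n i j) m)
    (hm' : isM r (fun t => lam t - (m : ℝ) * rootv n i j t) (rootv n k l) m')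
    (had1 : dval Λ σ i j = 1)
    (had2 : dval Λ (Equiv.swap i j * σ) k l = 1)
    (endv : Fin n → ℝ)
    (hend : endv = fun t => lam t - (m : ℝ) * rootv n i j t - (m' : ℝ) * rootv n k l t) :
    (∃! P : (Fin n × Fin n) × (Fin n × Fin n),
        P.1 ≠ (i, j) ∧ AdmSq n r Λ σ lam endv P.1.1 P.1.2 P.2.1 P.2.2) ∧
    (pairing (rootv n i j) (rootv n k l) = 0 → AdmSq n r Λ σ lam endv k l i j) ∧
    (∀ p q : Fin n, p < q →
      (fun t => rootv n i j t - rootv n k l t) = rootv n p q →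
      AdmSq n r Λ σ lam endv k l p q) ∧
    (∀ p q : Fin n, p < q →
      (fun t => rootv n k l t - rootv n i j t) = rootv n p q →
      AdmSq n r Λ σ lam endv p q i j) ∧
    (∀ p q : Fin n, p < q →
      (fun t => rootv n i j t + rootv n k l t) = rootv n p q →
      (m' < m → AdmSq n r Λ σ lam endv p q i j) ∧
      (m < m' → AdmSq n r Λ σ lam endv k l p q)) := by
  obtain ⟨x, hx⟩ : ∃ x : Fin n → ℝ, x = fun t => Λ (σ.symm t) := ⟨_, rfl⟩
  have hw : Win (r : ℝ) x := by
    intro a b hab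
    have hne' : σ.symm a ≠ σ.symm b := σ.symm.injective.ne hab
    rw [hx]
    rcases lt_or_gt_of_ne hne' with h | h
    · have := hΛ _ _ h
      exact ⟨by intro h'; simp only at h'; linarith, this.2⟩
    · have := hΛ _ _ h
      exact ⟨by intro h'; simp only at h'; linarith, by simp only; linarith⟩
  have hlam' : lam = fun t => x t + (r : ℝ) * (γ t : ℝ) := by rw [hlam, hx]
  have hA : AdmSq n r Λ σ lam endv i j k l := ⟨hij, hkl, had1, had2, m, m', hm, hm', hend⟩
  have ADM := adm_iff r Λ hΛ σ γ x hx hw lam hlam' endv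
  have M : (m : ℝ) = dd r (x i) (x j) := by
    rw [hlam'] at hm
    exact (isM_iff r x hw γ i j hij.ne m).1 hm
  have M' : (m' : ℝ) = dd r (sw x i j k) (sw x i j l) := by
    obtain ⟨γ', h⟩ := reflect r x γ i j hij.ne
    rw [hlam', M, h] at hm'
    exact (isM_iff r _ (hw.sw i j) γ' k l hkl.ne m').1 hm'
  obtain ⟨-, -, Q, Q', -⟩ := (ADM i j k l).1 hA
  clear hA
  have mk : ∀ (i' j' k' l' : Fin n) (μ μ' : ℤ), i' < j' → k' < l' →
      (QC r x i' j' ∧ QC r (sw x i' j') k' l' ∧ (μ : ℝ) = dd r (x i') (x j') ∧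
      (μ' : ℝ) = dd r (sw x i' j' k') (sw x i' j' l')) →
      (∀ t, (m : ℝ) * rootv n i j t + (m' : ℝ) * rootv n k l t =
        (μ : ℝ) * rootv n i' j' t + (μ' : ℝ) * rootv n k' l' t) →
      AdmSq n r Λ σ lam endv i' j' k' l' := by
    rintro i' j' k' l' μ μ' h1 h2 ⟨h3, h4, h5, h6⟩ h7
    rw [ADM]
    refine ⟨h1, h2, h3, h4, μ, μ', h5, h6, ?_⟩
    rw [hend]
    funext t
    linarith [h7 t]
  have un : ∀ i' j' k' l' : Fin n, AdmSq n r Λ σ lam endv i' j' k' l' →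
      i' < j' ∧ k' < l' ∧ ∃ μ μ' : ℝ, μ = dd r (x i') (x j') ∧
      μ' = dd r (sw x i' j' k') (sw x i' j' l') ∧
      (∀ t, (m : ℝ) * rootv n i j t + (m' : ℝ) * rootv n k l t =
        μ * rootv n i' j' t + μ' * rootv n k' l' t) := by
    intro i' j' k' l' h
    rw [ADM] at h
    obtain ⟨h1, h2, -, -, μ, μ', h5, h6, h7⟩ := h
    refine ⟨h1, h2, μ, μ', h5, h6, fun t => ?_⟩
    rw [hend] at h7
    have := congrFun h7 t
    linarith
  clear ADM had1 had2 hm hm' hlam hlam' hx hend hΛ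
  have EU : ∀ i' j' k' l' : Fin n, ¬(i' = i ∧ j' = j) → AdmSq n r Λ σ lam endv i' j' k' l' →
      (∀ (p q s t : Fin n) (μ μ' : ℝ), p < q → s < t → μ = dd r (x p) (x q) →
        μ' = dd r (sw x p q s) (sw x p q t) →
        (∀ u, (m : ℝ) * rootv n i j u + (m' : ℝ) * rootv n k l u =
          μ * rootv n p q u + μ' * rootv n s t u) → ¬(p = i ∧ q = j) →
        p = i' ∧ q = j' ∧ s = k' ∧ t = l') →
      ∃! P : (Fin n × Fin n) × (Fin n × Fin n),
        P.1 ≠ (i, j) ∧ AdmSq n r Λ σ lam endv P.1.1 P.1.2 P.2.1 P.2.2 := by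
    intro i' j' k' l' h1 h2 h3
    refine ⟨((i', j'), (k', l')), ⟨?_, h2⟩, ?_⟩
    · simpa using h1
    · rintro ⟨⟨p, q⟩, ⟨s, t⟩⟩ ⟨h4, h5⟩
      obtain ⟨a1, a2, μ, μ', a3, a4, a5⟩ := un _ _ _ _ h5
      obtain ⟨rfl, rfl, rfl, rfl⟩ := h3 p q s t μ μ' a1 a2 a3 a4 a5 (by simpa using h4)
      rfl
  have B2 : i ≠ k → i ≠ l → j ≠ k → j ≠ l → AdmSq n r Λ σ lam endv k l i j := by
    intro h1 h2 h3 h4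
    obtain ⟨a1, a2, a3, a4⟩ := ex_disj r x hw i j k l hij hkl h1 h2 h3 h4 Q Q'
    exact mk k l i j m' m hkl hij ⟨a1, a2, by rw [a3, M'], by rw [a4, M]⟩ (fun t => by ring)
  have B3a : i = k → l < j → AdmSq n r Λ σ lam endv i l l j := by
    rintro rfl h
    refine mk i l l j (m + m') m hkl h ?_ (fun t => by simp only [rootv]; push_cast; ring)
    have := ex_T1 r x hw i l j hkl h m m' M M' Q Q'
    push_cast
    exact this
  have B4a : i = k → j < l → AdmSq n r Λ σ lam endv j l i j := by
    rintro rfl h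
    refine mk j l i j m' (m + m') h hij ?_ (fun t => by simp only [rootv]; push_cast; ring)
    have := ex_T2 r x hw i j l hij h m m' M M' Q Q'
    push_cast
    exact this
  have B3b : j = l → i < k → AdmSq n r Λ σ lam endv k j i k := by
    rintro rfl h
    refine mk k j i k (m + m') m hkl h ?_ (fun t => by simp only [rootv]; push_cast; ring)
    have := ex_T3 r x hw i k j h hkl m m' M M' Q Q'
    push_cast
    exact this
  have B4b : j = l → k < i → AdmSq n r Λ σ lam endv k i i j := by
    rintro rfl h
    refine mk k i i j m' (m + m') h hij ?_ (fun t => by simp only [rootv]; push_cast; ring)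
    have := ex_T4 r x hw k i j h hij m m' M M' Q Q'
    push_cast
    exact this
  have B5a : j = k → m' < m → AdmSq n r Λ σ lam endv i l i j := by
    rintro rfl h
    refine mk i l i j m' (m - m') (hij.trans hkl) hij ?_
      (fun t => by simp only [rootv]; push_cast; ring)
    have := ex_T5 r x hw i j l hij hkl m m' M M' (by exact_mod_cast h) Q Q'
    push_cast
    exact this
  have B5b : j = k → m < m' → AdmSq n r Λ σ lam endv j l i l := by
    rintro rfl h
    refine mk j l i l (m' - m) m hkl (hij.trans hkl) ?_
      (fun t => by simp only [rootv]; push_cast; ring)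
    have := ex_T6 r x hw i j l hij hkl m m' M M' (by exact_mod_cast h) Q Q'
    push_cast
    exact this
  have B6a : i = l → m' < m → AdmSq n r Λ σ lam endv k j i j := by
    rintro rfl h
    refine mk k j i j m' (m - m') (hkl.trans hij) hij ?_
      (fun t => by simp only [rootv]; push_cast; ring)
    have := ex_T7 r x hw k i j hkl hij m m' M M' (by exact_mod_cast h) Q Q'
    push_cast
    exact this
  have B6b : i = l → m < m' → AdmSq n r Λ σ lam endv k i k j := by
    rintro rfl h
    refine mk k i k j (m' - m) m hkl (hkl.trans hij) ?_
      (fun t => by simp only [rootv]; push_cast; ring)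
    have := ex_T8 r x hw k i j hkl hij m m' M M' (by exact_mod_cast h) Q Q'
    push_cast
    exact this
  refine ⟨?_, ?_, ?_, ?_, ?_⟩
  · by_cases h1 : i = k
    · subst h1
      have h2 : j ≠ l := fun h => hne ⟨rfl, h⟩
      rcases lt_or_gt_of_ne h2 with h | h
      · refine EU _ _ _ _ (by omega) (B4a rfl h) ?_
        intro p q s t μ μ' a1 a2 a3 a4 a5 a6
        exact uq_T2 r x hw i j l hij h p q s t a1 a2 m m' μ μ' M M' a3 a4 a5 a6
      · refine EU _ _ _ _ (by omega) (B3a rfl h) ?_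
        intro p q s t μ μ' a1 a2 a3 a4 a5 a6
        exact uq_T1 r x hw i l j hkl h p q s t a1 a2 m m' μ μ' M M' a3 a4 a5 a6
    · by_cases h2 : j = l
      · subst h2
        rcases lt_or_gt_of_ne h1 with h | h
        · refine EU _ _ _ _ (by omega) (B3b rfl h) ?_
          intro p q s t μ μ' a1 a2 a3 a4 a5 a6
          exact uq_T3 r x hw i k j h hkl p q s t a1 a2 m m' μ μ' M M' a3 a4 a5 a6
        · refine EU _ _ _ _ (by omega) (B4b rfl h) ?_
          intro p q s t μ μ' a1 a2 a3 a4 a5 a6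
          exact uq_T4 r x hw k i j h hij p q s t a1 a2 m m' μ μ' M M' a3 a4 a5 a6
      · by_cases h3 : j = k
        · subst h3
          have hmm : m ≠ m' := by
            intro h
            have M2 := M'
            rw [sw_right, sw_other x i j l (by omega) (by omega)] at M2
            exact dd_r (hw j l h2) (hw l j (Ne.symm h2)) M M2 (by exact_mod_cast h)
          rcases lt_or_gt_of_ne hmm with h | h
          · refine EU _ _ _ _ (by omega) (B5b rfl h) ?_
            intro p q s t μ μ' a1 a2 a3 a4 a5 a6
            exact uq_T6 r x hw i j l hij hkl p q s t a1 a2 m m' μ μ' M M'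
              (by exact_mod_cast h) a3 a4 a5 a6
          · refine EU _ _ _ _ (by omega) (B5a rfl h) ?_
            intro p q s t μ μ' a1 a2 a3 a4 a5 a6
            exact uq_T5 r x hw i j l hij hkl p q s t a1 a2 m m' μ μ' M M'
              (by exact_mod_cast h) a3 a4 a5 a6
        · by_cases h4 : i = l
          · subst h4
            have hmm : m ≠ m' := by
              intro h
              have M2 := M'
              rw [sw_left, sw_other x i j k (by omega) (by omega)] at M2
              exact dd_l (hw i k h1) (hw k i (Ne.symm h1)) M M2 (by exact_mod_cast h)
            rcases lt_or_gt_of_ne hmm with h | h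
            · refine EU _ _ _ _ (by omega) (B6b rfl h) ?_
              intro p q s t μ μ' a1 a2 a3 a4 a5 a6
              exact uq_T8 r x hw k i j hkl hij p q s t a1 a2 m m' μ μ' M M'
                (by exact_mod_cast h) a3 a4 a5 a6
            · refine EU _ _ _ _ (by omega) (B6a rfl h) ?_
              intro p q s t μ μ' a1 a2 a3 a4 a5 a6
              exact uq_T7 r x hw k i j hkl hij p q s t a1 a2 m m' μ μ' M M'
                (by exact_mod_cast h) a3 a4 a5 a6
          · refine EU _ _ _ _ (by omega) (B2 h1 h4 h3 h2) ?_
            intro p q s t μ μ' a1 a2 a3 a4 a5 a6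
            exact uniq4 r x hw i j k l p q s t hij hkl h1 h4 h3 h2 a1 a2 m m' μ μ' M M' a3 a4 a5 a6
  · intro h
    obtain ⟨h1, h2, h3, h4⟩ := pairing_zero i j k l hij hkl hne h
    exact B2 h1 h2 h3 h4
  · intro p q hpq h
    rcases root_sub i j k l p q hij hkl hne hpq h with ⟨rfl, rfl, rfl⟩ | ⟨rfl, rfl, rfl⟩
    · exact B3a rfl hpq
    · exact B3b rfl hpq
  · intro p q hpq h
    rcases root_sub k l i j p q hkl hij (fun hh => hne ⟨hh.1.symm, hh.2.symm⟩) hpq h with ⟨h1, rfl, rfl⟩ | ⟨h1, rfl, rfl⟩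
    · exact B4a h1.symm hpq
    · exact B4b h1.symm hpq
  · intro p q hpq h
    rcases root_add i j k l p q hij hkl hpq h with ⟨h1, rfl, rfl⟩ | ⟨h1, rfl, rfl⟩
    · subst h1
      exact ⟨B5a rfl, B5b rfl⟩
    · subst h1
      exact ⟨B6a rfl, B6b rfl⟩
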